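/- arXiv:1808.04917 — 2 statements merged into one kernel-verified Lean document; each statement's English description precedes it below -/
import Mathlib

section
/- Let α ∈ Λ and write α = ∑_{i=0}^{n−1} ∑_{j=0}^{n−1} a_{i,j} ε₀^i ε₁^j with a_{i,j} ∈ ℤ. Then α ∈ A₁ if and only if every row sum and every column sum of the matrix [a_{i,j}] vanishes, i.e., for every i one has ∑_{j=0}^{n−1} a_{i,j} = 0 and for every j one has ∑_{i=0}^{n−1} a_{i,j} = 0. -/
noncomputable section

/-- The group `μₙ × μₙ`, realized as `Multiplicative (ZMod n) × Multiplicative (ZMod n)`. -/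
abbrev MuMu (n : ℕ) : Type := Multiplicative (ZMod n) × Multiplicative (ZMod n)

/-- The group ring `Λ = ℤ[μₙ × μₙ]`. -/
abbrev Lam (n : ℕ) : Type := MonoidAlgebra ℤ (MuMu n)

/-- `ε₀`, the first standard generator of `μₙ × μₙ` viewed in `Λ`. -/
def eps0 (n : ℕ) : Lam n := MonoidAlgebra.of ℤ (MuMu n) (Multiplicative.ofAdd 1, 1)

/-- `ε₁`, the second standard generator of `μₙ × μₙ` viewed in `Λ`. -/
def eps1 (n : ℕ) : Lam n := MonoidAlgebra.of ℤ (MuMu n) (1, Multiplicative.ofAdd 1)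

/-- The ideal `A₁ = ⟨(ε₀ − 1)(ε₁ − 1)⟩ ⊆ Λ`. -/
def A1 (n : ℕ) : Ideal (Lam n) := Ideal.span {(eps0 n - 1) * (eps1 n - 1)}

/-!
Write `u = (g, 1)` and `v = (1, h)` in `R[G × H]`. Projecting onto `R[G]` sends `v - 1` to `0`,
hence kills the ideal generated by `(u - 1) * (v - 1)`, and turns a double sum over `u ^ i * v ^ j`
into a combination of distinct powers of `g` whose coefficients are the row sums; the column sums
are dealt with by symmetry. Conversely, if all row and column sums vanish, then `u ^ i * v ^ j` may
be replaced by `(u ^ i - 1) * (v ^ j - 1)`, which is a multiple of `(u - 1) * (v - 1)`.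
-/

section LinearIndependence

variable {R M : Type*} [Semiring R] [Monoid M]

lemma linearIndependent_monoidAlgebra_of : LinearIndependent R (MonoidAlgebra.of R M) :=
  (MonoidAlgebra.basis M R).linearIndependent

lemma linearIndepOn_monoidAlgebra_of_pow {g : M} {s : Set ℕ} (hg : s.InjOn (g ^ ·)) :
    LinearIndepOn R (MonoidAlgebra.of R M g ^ ·) s := by
  simp only [← map_pow]
  exact linearIndependent_monoidAlgebra_of.comp (fun i : s => g ^ (i : ℕ)) hg.injective

end LinearIndependence

section Algebra

variable {R S : Type*} [CommSemiring R] [CommRing S] [Algebra R S] {a : ℕ → ℕ → R}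
  {s t : Finset ℕ} {u v : S}

lemma sum_smul_pow_mul_pow_eq_sum_smul_pow_sub_one_mul_pow_sub_one
    (hrow : ∀ i ∈ s, ∑ j ∈ t, a i j = 0) (hcol : ∀ j ∈ t, ∑ i ∈ s, a i j = 0) :
    ∑ i ∈ s, ∑ j ∈ t, a i j • (u ^ i * v ^ j) =
      ∑ i ∈ s, ∑ j ∈ t, a i j • ((u ^ i - 1) * (v ^ j - 1)) := by
  have row_sum_smul (x : ℕ → S) : ∑ i ∈ s, ∑ j ∈ t, a i j • x i = 0 :=
    Finset.sum_eq_zero fun i hi => by rw [← Finset.sum_smul, hrow i hi, zero_smul]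
  have col_sum_smul (y : ℕ → S) : ∑ i ∈ s, ∑ j ∈ t, a i j • y j = 0 := by
    rw [Finset.sum_comm]
    exact Finset.sum_eq_zero fun j hj => by rw [← Finset.sum_smul, hcol j hj, zero_smul]
  have expand (i j : ℕ) : (u ^ i - 1) * (v ^ j - 1) = u ^ i * v ^ j - v ^ j - (u ^ i - 1) := by
    ring
  simp only [expand, smul_sub (a _ _) (_ - _) (_ - _), smul_sub (a _ _) (_ * _),
    Finset.sum_sub_distrib, row_sum_smul (u ^ · - 1), col_sum_smul (v ^ ·), sub_zero]

lemma sum_smul_pow_mul_pow_mem_span_of_sum_eq_zero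
    (hrow : ∀ i ∈ s, ∑ j ∈ t, a i j = 0) (hcol : ∀ j ∈ t, ∑ i ∈ s, a i j = 0) :
    ∑ i ∈ s, ∑ j ∈ t, a i j • (u ^ i * v ^ j) ∈ Ideal.span {(u - 1) * (v - 1)} := by
  rw [sum_smul_pow_mul_pow_eq_sum_smul_pow_sub_one_mul_pow_sub_one hrow hcol,
    Ideal.mem_span_singleton]
  exact Finset.dvd_sum fun i _ => Finset.dvd_sum fun j _ => dvd_smul_of_dvd _ <|
    mul_dvd_mul (sub_one_dvd_pow_sub_one u i) (sub_one_dvd_pow_sub_one v j)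

lemma row_sum_eq_zero_of_mem_span {T : Type*} [Ring T] [Algebra R T] (φ : S →ₐ[R] T) (hv : φ v = 1)
    (hu : LinearIndepOn R (φ u ^ ·) (s : Set ℕ))
    (hmem : ∑ i ∈ s, ∑ j ∈ t, a i j • (u ^ i * v ^ j) ∈ Ideal.span {(u - 1) * (v - 1)}) :
    ∀ i ∈ s, ∑ j ∈ t, a i j = 0 := by
  obtain ⟨c, hc⟩ := Ideal.mem_span_singleton.mp hmem
  have hsum : ∑ i ∈ s, (∑ j ∈ t, a i j) • φ u ^ i = 0 := by
    simpa [hv, Finset.sum_smul] using congrArg φ hc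
  exact linearIndepOn_finset_iffₛ.mp hu _ 0 (by simpa using hsum)

end Algebra

theorem stmt_3_general {R G H : Type*} [CommRing R] [CommMonoid G] [CommMonoid H] {g : G} {h : H}
    {s t : Finset ℕ} (hg : (s : Set ℕ).InjOn (g ^ ·)) (hh : (t : Set ℕ).InjOn (h ^ ·))
    (a : ℕ → ℕ → R) :
    ∑ i ∈ s, ∑ j ∈ t, a i j •
        (MonoidAlgebra.of R (G × H) (g, 1) ^ i * MonoidAlgebra.of R (G × H) (1, h) ^ j) ∈
      Ideal.span {(MonoidAlgebra.of R (G × H) (g, 1) - 1) *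
        (MonoidAlgebra.of R (G × H) (1, h) - 1)} ↔
      (∀ i ∈ s, ∑ j ∈ t, a i j = 0) ∧ (∀ j ∈ t, ∑ i ∈ s, a i j = 0) := by
  refine ⟨fun hmem => ⟨?rows, ?columns⟩, fun ⟨hrow, hcol⟩ =>
    sum_smul_pow_mul_pow_mem_span_of_sum_eq_zero hrow hcol⟩
  case rows =>
    refine row_sum_eq_zero_of_mem_span
      (MonoidAlgebra.mapDomainAlgHom R R (MonoidHom.fst G H)) ?_ ?_ hmem
    · simp [MonoidAlgebra.one_def]
    · simpa using linearIndepOn_monoidAlgebra_of_pow (R := R) hg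
  case columns =>
    rw [Finset.sum_comm, mul_comm (_ - _)] at hmem
    simp only [mul_comm (MonoidAlgebra.of R (G × H) (g, 1) ^ _)] at hmem
    refine row_sum_eq_zero_of_mem_span (a := fun j i => a i j)
      (MonoidAlgebra.mapDomainAlgHom R R (MonoidHom.snd G H)) ?_ ?_ hmem
    · simp [MonoidAlgebra.one_def]
    · simpa using linearIndepOn_monoidAlgebra_of_pow (R := R) hh

lemma injOn_range_ofAdd_one_pow (n : ℕ) :
    (Finset.range n : Set ℕ).InjOn (Multiplicative.ofAdd (1 : ZMod n) ^ ·) := by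
  simpa [orderOf_ofAdd_eq_addOrderOf, ZMod.addOrderOf_one] using
    pow_injOn_Iio_orderOf (x := Multiplicative.ofAdd (1 : ZMod n))

/-- writing `α = ∑_{i,j=0}^{n-1} a_{i,j} ε₀^i ε₁^j ∈ Λ`, one has `α ∈ A₁`
if and only if all row sums and all column sums of the matrix `[a_{i,j}]` vanish. -/
theorem stmt_3 (n : ℕ) (hn : 3 ≤ n) (a : ℕ → ℕ → ℤ) (α : Lam n)
    (hα : α = ∑ i ∈ Finset.range n, ∑ j ∈ Finset.range n, a i j • (eps0 n ^ i * eps1 n ^ j)) :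
    α ∈ A1 n ↔
      (∀ i < n, ∑ j ∈ Finset.range n, a i j = 0) ∧
      (∀ j < n, ∑ i ∈ Finset.range n, a i j = 0) := by
  simpa only [hα, A1, eps0, eps1, Finset.mem_range] using
    stmt_3_general (injOn_range_ofAdd_one_pow n) (injOn_range_ofAdd_one_pow n) a
end
end

section
/- The element S* lies in the commutator subgroup [F, F] of F; equivalently, in the abelianization of F, each generator x_{i,j} occurs in S* with total exponent 0. -/
noncomputable section
open scoped Classical

/-- The index set of pairs `(i,j)` with `1 ≤ i, j ≤ n−1`. -/
def Idx (n : ℕ) : Type := {p : ℕ × ℕ // 1 ≤ p.1 ∧ p.1 ≤ n - 1 ∧ 1 ≤ p.2 ∧ p.2 ≤ n - 1}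

/-- The free group `F` on the generators `x_{i,j}`, `1 ≤ i, j ≤ n−1`. -/
abbrev F (n : ℕ) : Type := FreeGroup (Idx n)

/-- The generator `x_{i,j}` of `F` (defined to be `1` for out-of-range indices;
all indices used below are in range). -/
def xg (n : ℕ) (i j : ℕ) : F n :=
  if h : 1 ≤ i ∧ i ≤ n - 1 ∧ 1 ≤ j ∧ j ≤ n - 1 then FreeGroup.of ⟨(i, j), h⟩ else 1

/-- `E(i,j) ∈ F` for arbitrary integers `i, j`: it is `x_{i',j'}`, where `i', j' ∈ {1,…,n−1}`
are the representatives of `i` and `j` modulo `n`, provided neither `i` nor `j` is divisible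
by `n`, and `1` otherwise. -/
def Eg (n : ℕ) (i j : ℤ) : F n :=
  if (n : ℤ) ∣ i ∨ (n : ℤ) ∣ j then 1 else xg n (i % (n : ℤ)).toNat (j % (n : ℤ)).toNat

/-- `S*_ℓ = ∏_{t=0}^{n−1} E(t−ℓ, t)·E(t−ℓ, t+1)⁻¹` (product in increasing order of `t`). -/
def SstarL (n : ℕ) (ℓ : ℕ) : F n :=
  ((List.range n).map fun t =>
    Eg n ((t : ℤ) - (ℓ : ℤ)) (t : ℤ) * (Eg n ((t : ℤ) - (ℓ : ℤ)) ((t : ℤ) + 1))⁻¹).prod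

/-- `S* = S*₀ · S*₁ ⋯ S*_{n−1}`. -/
def Sstar (n : ℕ) : F n := ((List.range n).map fun ℓ => SstarL n ℓ).prod

/-!
In the abelianization the factors of `S*` may be collected by `t`. For fixed `t` and `j`, the
product of `E(t-ℓ, j)` over a full period of `ℓ` does not depend on `t`. Writing `C(j)` for it, the
image of `S*` is the telescoping product of `C(t) / C(t+1)` over `0 ≤ t < n`, that is, `C(0) / C(n)`,
which is trivial because `E(i, 0) = E(i, n)`.
-/

section PeriodicProducts

variable {R : Type*} [AddGroupWithOne R] {n : ℕ}

lemma periodic_one_prod_range_sub {M : Type*} [CommMonoid M] {f : R → M}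
    (hf : Function.Periodic f n) :
    Function.Periodic (fun t => ∏ l ∈ Finset.range n, f (t - l)) 1 := by
  intro t
  cases n with
  | zero => simp only [Finset.range_zero, Finset.prod_empty]
  | succ m =>
    have wrap : f (t + 1) = f (t - m) := by
      rw [← hf (t - m), Nat.cast_succ, ← add_assoc, sub_add_cancel]
    beta_reduce
    rw [Finset.prod_range_succ', Finset.prod_range_succ]
    simp only [Nat.cast_succ, add_sub_add_right_eq_sub, Nat.cast_zero, sub_zero, wrap]

lemma prod_range_prod_range_sub_div_succ {A : Type*} [CommGroup A] {f : R → R → A}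
    (periodic_left : ∀ j, Function.Periodic (f · j) n) (wrap_right : ∀ i, f i n = f i 0) :
    ∏ l ∈ Finset.range n, ∏ t ∈ Finset.range n, f (t - l) t / f (t - l) (t + 1) = 1 := by
  let C (t : ℕ) : A := ∏ l ∈ Finset.range n, f (t - l) t
  have prod_next (t : ℕ) : ∏ l ∈ Finset.range n, f (t - l) (t + 1) = C (t + 1) := by
    simpa only [C, Nat.cast_succ] using
      (periodic_one_prod_range_sub (periodic_left (t + 1)) t).symm
  have C_wrap : C n = C 0 := by
    simpa only [C, wrap_right, Nat.cast_zero, nsmul_one] using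
      (periodic_one_prod_range_sub (periodic_left 0)).nsmul_eq n
  calc
    _ = ∏ t ∈ Finset.range n, C t / C (t + 1) := by
      rw [Finset.prod_comm]
      simp only [Finset.prod_div_distrib, prod_next, C]
    _ = 1 := by rw [Finset.prod_range_div', C_wrap, div_self']

theorem stmt_12_general {G : Type*} [Group G] {e : R → R → G}
    (periodic_left : ∀ j, Function.Periodic (e · j) n) (wrap_right : ∀ i, e i n = e i 0) :
    ((List.range n).map fun l : ℕ => ((List.range n).map fun t : ℕ =>
      e (t - l) t * (e (t - l) (t + 1))⁻¹).prod).prod ∈ commutator G := by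
  rw [← Abelianization.ker_of, MonoidHom.mem_ker]
  simp only [map_list_prod, List.map_map, Function.comp_def, ← div_eq_mul_inv, map_div]
  exact prod_range_prod_range_sub_div_succ (f := fun i j => Abelianization.of (e i j))
    (fun j => (periodic_left j).comp Abelianization.of)
    fun i => congrArg Abelianization.of (wrap_right i)

end PeriodicProducts

lemma Eg_periodic_left (n : ℕ) (j : ℤ) : Function.Periodic (Eg n · j) n := by
  intro i
  simp only [Eg, Int.add_emod_right, dvd_add_self_right]

lemma Eg_zero_right (n : ℕ) (i : ℤ) : Eg n i 0 = 1 :=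
  if_pos (Or.inr (dvd_zero _))

lemma Eg_natCast_self_right (n : ℕ) (i : ℤ) : Eg n i n = 1 :=
  if_pos (Or.inr dvd_rfl)

-- In the definition of `SstarL` the variable `t` is elaborated as an integer, so `List.range n`
-- is coerced to `List ℤ` by a monadic lift.
lemma SstarL_eq_prod_map_range (n l : ℕ) :
    SstarL n l = ((List.range n).map fun t : ℕ =>
      Eg n ((t : ℤ) - l) t * (Eg n ((t : ℤ) - l) (t + 1))⁻¹).prod := by
  simp only [SstarL, bind_pure_comp, List.map_eq_map, List.map_map, Function.comp_def]

/-- the element `S*` lies in the commutator subgroup `[F, F]` of `F`. -/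
theorem stmt_12 (n : ℕ) (hn : 3 ≤ n) : Sstar n ∈ commutator (F n) := by
  simp only [Sstar, SstarL_eq_prod_map_range]
  exact stmt_12_general (Eg_periodic_left n) fun i =>
    (Eg_natCast_self_right n i).trans (Eg_zero_right n i).symm
end
end
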